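/- Let E be a unital idempotent CPTP map on d×d complex matrices, let a ∈ (0,1)∪(1,2], and let ρ be a positive definite density matrix. Then (Tr((E(ρ^a))^{1/a}) − 1)/(a − 1) ≥ 0, with equality if and only if E(ρ) = ρ. -/

import Mathlib

open Matrix
open scoped ComplexOrder

/-- Matrix power `A ^ t` for real `t`, via the continuous functional calculus
(applying `x ↦ x ^ t` to the eigenvalues of a Hermitian matrix `A`). -/
noncomputable def mpow {d : ℕ} (A : Matrix (Fin d) (Fin d) ℂ) (t : ℝ) :
    Matrix (Fin d) (Fin d) ℂ :=
  cfc (fun x : ℝ => x ^ t) A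

/-- The Tsallis-based relative entropy
`S̃_a(ρ|σ) = ((Tr (ρ^a σ^(1-a)))^(1/a) - 1) / (a - 1)`. -/
noncomputable def tsallis {d : ℕ} (a : ℝ) (ρ σ : Matrix (Fin d) (Fin d) ℂ) : ℝ :=
  ((((mpow ρ a * mpow σ (1 - a)).trace).re) ^ (1 / a) - 1) / (a - 1)

/-!
In eigenbases of `A` and of `B = E(A) = ∑ₖ Kₖ A Kₖ†`, the eigenvalues of `B` arise from those of `A`
through the doubly stochastic matrix `Dᵢⱼ = ∑ₖ |(Kₖ)ᵢⱼ|²`. Jensen's inequality then gives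
`Tr f(E(A)) ≤ Tr f(A)` for convex `f`. If `f` is strictly convex and equality holds, then `Dᵢⱼ ≠ 0`
only between equal eigenvalues, that is, `Kₖ A = E(A) Kₖ` for all `k`. With `f x = x ^ 2` this shows
that a Hermitian fixed point of `E` commutes with every Kraus operator; so if `E` is idempotent,
`Kₖ A = E(A) Kₖ = Kₖ E(A)`, and summing after multiplication by `Kₖ†` yields `E(A) = A`. The theorem
is the case `A = ρ ^ a`, `f x = x ^ (1 / a)`, where `Tr f(A) = Tr ρ`, and where fixed points pass
between `ρ` and `ρ ^ a` because both are functions of each other.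
-/

open RCLike (re)

variable {𝕜 n ι : Type*} [RCLike 𝕜]

section DoublyStochastic

variable [Fintype n] [DecidableEq n] {D : Matrix n n ℝ} {s : Set ℝ} {f : ℝ → ℝ} {x : n → ℝ}

lemma sum_mulVec_eq_sum_of_mem_doublyStochastic (hD : D ∈ doublyStochastic ℝ n) (y : n → ℝ) :
    ∑ i, (D *ᵥ y) i = ∑ j, y j := by
  simp only [mulVec, dotProduct]
  rw [Finset.sum_comm]
  simp only [← Finset.sum_mul, sum_col_of_mem_doublyStochastic hD, one_mul]

lemma map_mulVec_le_of_mem_doublyStochastic (hD : D ∈ doublyStochastic ℝ n) (hf : ConvexOn ℝ s f)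
    (hx : ∀ i, x i ∈ s) (i : n) : f ((D *ᵥ x) i) ≤ (D *ᵥ (f ∘ x)) i :=
  hf.map_sum_le (fun _ _ => nonneg_of_mem_doublyStochastic hD)
    (sum_row_of_mem_doublyStochastic hD i) (fun j _ => hx j)

lemma sum_map_mulVec_le_of_mem_doublyStochastic (hD : D ∈ doublyStochastic ℝ n)
    (hf : ConvexOn ℝ s f) (hx : ∀ i, x i ∈ s) : ∑ i, f ((D *ᵥ x) i) ≤ ∑ i, f (x i) :=
  calc ∑ i, f ((D *ᵥ x) i) ≤ ∑ i, (D *ᵥ (f ∘ x)) i :=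
        Finset.sum_le_sum fun i _ => map_mulVec_le_of_mem_doublyStochastic hD hf hx i
    _ = ∑ i, f (x i) := sum_mulVec_eq_sum_of_mem_doublyStochastic hD (f ∘ x)

lemma eq_mulVec_of_sum_map_mulVec_eq (hD : D ∈ doublyStochastic ℝ n) (hf : StrictConvexOn ℝ s f)
    (hx : ∀ i, x i ∈ s) (heq : ∑ i, f ((D *ᵥ x) i) = ∑ i, f (x i)) {i j : n} (hij : D i j ≠ 0) :
    x j = (D *ᵥ x) i := by
  have row_eq : f ((D *ᵥ x) i) = (D *ᵥ (f ∘ x)) i :=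
    (Finset.sum_eq_sum_iff_of_le fun i _ =>
      map_mulVec_le_of_mem_doublyStochastic hD hf.convexOn hx i).1
      (heq.trans (sum_mulVec_eq_sum_of_mem_doublyStochastic hD (f ∘ x)).symm) i (Finset.mem_univ i)
  exact (hf.map_sum_eq_iff' (fun _ _ => nonneg_of_mem_doublyStochastic hD)
    (sum_row_of_mem_doublyStochastic hD i) (fun j _ => hx j)).1 row_eq j (Finset.mem_univ j) hij

end DoublyStochastic

variable [Fintype ι] (K : ι → Matrix n n 𝕜)

/-- The matrix `Dᵢⱼ = ∑ₖ |(Kₖ)ᵢⱼ|²` of transition weights between basis states, through which the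
map with Kraus operators `K` acts on diagonals. -/
def transitionMatrix : Matrix n n ℝ :=
  Matrix.of fun i j => ∑ k, ‖K k i j‖ ^ 2

lemma transitionMatrix_apply (i j : n) : transitionMatrix K i j = ∑ k, ‖K k i j‖ ^ 2 := rfl

lemma transitionMatrix_conjTranspose :
    transitionMatrix (fun k => (K k)ᴴ) = (transitionMatrix K)ᵀ := by
  ext i j
  simp only [transitionMatrix_apply, conjTranspose_apply, norm_star, transpose_apply]

lemma transitionMatrix_ne_zero {i j : n} {k : ι} (h : K k i j ≠ 0) : transitionMatrix K i j ≠ 0 :=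
  (Finset.sum_pos' (fun _ _ => by positivity) ⟨k, Finset.mem_univ k, by positivity⟩).ne'

variable [Fintype n]

/-- The completely positive map `X ↦ ∑ₖ Kₖ X Kₖ†` with Kraus operators `K`. -/
def krausMap : Matrix n n 𝕜 →ₗ[𝕜] Matrix n n 𝕜 where
  toFun X := ∑ k, K k * X * (K k)ᴴ
  map_add' X Y := by simp only [mul_add, add_mul, Finset.sum_add_distrib]
  map_smul' c X := by
    simp only [Matrix.mul_smul, Matrix.smul_mul, Finset.smul_sum, RingHom.id_apply]

lemma krausMap_apply (X : Matrix n n 𝕜) : krausMap K X = ∑ k, K k * X * (K k)ᴴ := rfl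

lemma isHermitian_krausMap {A : Matrix n n 𝕜} (hA : A.IsHermitian) :
    (krausMap K A).IsHermitian := by
  simp only [krausMap_apply, IsHermitian, conjTranspose_sum, conjTranspose_mul,
    conjTranspose_conjTranspose, hA.eq, mul_assoc]

lemma krausMap_mul_mul (V U X : Matrix n n 𝕜) :
    krausMap (fun k => V * K k * U) X = V * krausMap K (U * X * Uᴴ) * Vᴴ := by
  simp only [krausMap_apply, conjTranspose_mul, Finset.mul_sum, Finset.sum_mul, mul_assoc]

variable [DecidableEq n]

lemma krausMap_one_eq_sum : krausMap K 1 = ∑ k, K k * (K k)ᴴ := by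
  simp only [krausMap_apply, mul_one]

lemma krausMap_diagonal_apply_self (x : n → ℝ) (i : n) :
    krausMap K (diagonal (RCLike.ofReal ∘ x)) i i = ((transitionMatrix K *ᵥ x) i : 𝕜) :=
  calc krausMap K (diagonal (RCLike.ofReal ∘ x)) i i
      = ∑ k, ∑ j, K k i j * (x j : 𝕜) * star (K k i j) := by
        rw [krausMap_apply, Matrix.sum_apply]
        refine Finset.sum_congr rfl fun k _ => ?_
        rw [mul_apply]
        simp only [mul_diagonal, conjTranspose_apply, Function.comp_apply]
    _ = ∑ j, ∑ k, (‖K k i j‖ : 𝕜) ^ 2 * (x j : 𝕜) := by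
        rw [Finset.sum_comm]
        simp only [RCLike.star_def, mul_right_comm _ _ (starRingEnd 𝕜 _), RCLike.mul_conj]
    _ = ((transitionMatrix K *ᵥ x) i : 𝕜) := by
        simp only [mulVec, dotProduct, transitionMatrix_apply, Finset.sum_mul]
        push_cast
        rfl

variable {K}

lemma mul_diagonal_eq_diagonal_mul {x y : n → ℝ}
    (h : ∀ i j, transitionMatrix K i j ≠ 0 → x j = y i) (k : ι) :
    K k * diagonal (RCLike.ofReal ∘ x) = diagonal (RCLike.ofReal ∘ y) * K k := by
  ext i j
  rw [mul_diagonal, diagonal_mul, Function.comp_apply, Function.comp_apply]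
  by_cases hij : K k i j = 0
  · rw [hij, zero_mul, mul_zero]
  · rw [h i j (transitionMatrix_ne_zero K hij), mul_comm]

variable (K) in
/-- `K` is a family of Kraus operators of a unital channel: `krausMap K` preserves the trace and
the identity. -/
structure IsUnitalKraus : Prop where
  sum_conjTranspose_mul_self : ∑ k, (K k)ᴴ * K k = 1
  sum_mul_conjTranspose_self : ∑ k, K k * (K k)ᴴ = 1

namespace IsUnitalKraus

lemma krausMap_one (hK : IsUnitalKraus K) : krausMap K 1 = 1 :=
  (krausMap_one_eq_sum K).trans hK.sum_mul_conjTranspose_self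

lemma conjTranspose (hK : IsUnitalKraus K) : IsUnitalKraus fun k => (K k)ᴴ where
  sum_conjTranspose_mul_self := by
    simpa only [conjTranspose_conjTranspose] using hK.sum_mul_conjTranspose_self
  sum_mul_conjTranspose_self := by
    simpa only [conjTranspose_conjTranspose] using hK.sum_conjTranspose_mul_self

lemma krausMap_unitary_mul_mul_one (hK : IsUnitalKraus K) (V U : unitaryGroup n 𝕜) :
    krausMap (fun k => (V : Matrix n n 𝕜) * K k * (U : Matrix n n 𝕜)) 1 = 1 := by
  have hV : (V : Matrix n n 𝕜) * (V : Matrix n n 𝕜)ᴴ = 1 := Unitary.coe_mul_star_self V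
  have hU : (U : Matrix n n 𝕜) * (U : Matrix n n 𝕜)ᴴ = 1 := Unitary.coe_mul_star_self U
  rw [krausMap_mul_mul, mul_one, hU, hK.krausMap_one, mul_one, hV]

lemma unitary_mul_mul (hK : IsUnitalKraus K) (V U : unitaryGroup n 𝕜) :
    IsUnitalKraus fun k => (V : Matrix n n 𝕜) * K k * (U : Matrix n n 𝕜) where
  sum_conjTranspose_mul_self := by
    have h := hK.conjTranspose.krausMap_unitary_mul_mul_one (star U) (star V)
    rw [krausMap_one_eq_sum] at h
    simpa only [conjTranspose_mul, conjTranspose_conjTranspose, Unitary.coe_star,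
      star_eq_conjTranspose, mul_assoc] using h
  sum_mul_conjTranspose_self :=
    (krausMap_one_eq_sum _).symm.trans (hK.krausMap_unitary_mul_mul_one V U)

lemma transitionMatrix_mulVec_one (hK : IsUnitalKraus K) : transitionMatrix K *ᵥ 1 = 1 := by
  ext i
  have h := krausMap_diagonal_apply_self K 1 i
  have hone : diagonal (RCLike.ofReal ∘ (1 : n → ℝ)) = (1 : Matrix n n 𝕜) := by
    simp [Function.comp_def]
  rw [hone, hK.krausMap_one, one_apply_eq] at h
  exact_mod_cast h.symm

lemma transitionMatrix_mem_doublyStochastic (hK : IsUnitalKraus K) :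
    transitionMatrix K ∈ doublyStochastic ℝ n := by
  refine mem_doublyStochastic.2 ⟨fun i j => Finset.sum_nonneg fun _ _ => by positivity,
    hK.transitionMatrix_mulVec_one, ?_⟩
  rw [← mulVec_transpose, ← transitionMatrix_conjTranspose]
  exact hK.conjTranspose.transitionMatrix_mulVec_one

end IsUnitalKraus

variable {A : Matrix n n 𝕜}

lemma re_trace_cfc (hA : A.IsHermitian) (f : ℝ → ℝ) :
    re (cfc f A).trace = ∑ i, f (hA.eigenvalues i) := by
  rw [hA.cfc_eq, IsHermitian.cfc, Unitary.conjStarAlgAut_apply, trace_mul_cycle,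
    Unitary.coe_star_mul_self, one_mul, trace_diagonal, map_sum]
  simp only [Function.comp_apply, RCLike.ofReal_re]

lemma re_trace_cfc_neg (f : ℝ → ℝ) (A : Matrix n n 𝕜) :
    re (cfc (-f) A).trace = -re (cfc f A).trace := by
  rw [show cfc (-f) A = -cfc f A from cfc_neg f A, trace_neg, map_neg]

variable (K) in
/-- The Kraus operators `K` written in an eigenbasis of `A` on the input side and an eigenbasis of
`krausMap K A` on the output side. -/
noncomputable def eigenKraus (hA : A.IsHermitian) (k : ι) : Matrix n n 𝕜 :=
  (star (isHermitian_krausMap K hA).eigenvectorUnitary : unitaryGroup n 𝕜) * K k *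
    (hA.eigenvectorUnitary : Matrix n n 𝕜)

variable (K) in
lemma krausMap_eigenKraus_diagonal (hA : A.IsHermitian) :
    krausMap (eigenKraus K hA) (diagonal (RCLike.ofReal ∘ hA.eigenvalues)) =
      diagonal (RCLike.ofReal ∘ (isHermitian_krausMap K hA).eigenvalues) := by
  set hB := isHermitian_krausMap K hA
  have hA_eq := hA.spectral_theorem
  have hB_diag := hB.conjStarAlgAut_star_eigenvectorUnitary
  rw [Unitary.conjStarAlgAut_apply] at hA_eq
  rw [Unitary.conjStarAlgAut_star_apply] at hB_diag
  unfold eigenKraus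
  rw [krausMap_mul_mul, ← star_eq_conjTranspose, ← hA_eq, Unitary.coe_star,
    ← star_eq_conjTranspose, star_star]
  exact hB_diag

variable (K) in
lemma eigenvalues_krausMap (hA : A.IsHermitian) :
    (isHermitian_krausMap K hA).eigenvalues =
      transitionMatrix (eigenKraus K hA) *ᵥ hA.eigenvalues := by
  ext i
  have h := krausMap_diagonal_apply_self (eigenKraus K hA) hA.eigenvalues i
  rw [krausMap_eigenKraus_diagonal, diagonal_apply_eq, Function.comp_apply] at h
  exact_mod_cast h

variable (K) in
lemma eq_mul_eigenKraus_mul (hA : A.IsHermitian) (k : ι) :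
    K k = (isHermitian_krausMap K hA).eigenvectorUnitary.1 * eigenKraus K hA k *
      star hA.eigenvectorUnitary.1 := by
  set U := hA.eigenvectorUnitary
  set V := (isHermitian_krausMap K hA).eigenvectorUnitary
  have hU : U.1 * star U.1 = 1 := Unitary.coe_mul_star_self U
  have hV : V.1 * star V.1 = 1 := Unitary.coe_mul_star_self V
  calc K k = V.1 * star V.1 * K k * (U.1 * star U.1) := by rw [hU, hV, one_mul, mul_one]
    _ = V.1 * eigenKraus K hA k * star U.1 := by
      simp only [eigenKraus, Unitary.coe_star, mul_assoc, U, V]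

lemma mul_eq_krausMap_mul_of_eigenKraus (hA : A.IsHermitian) {k : ι}
    (h : eigenKraus K hA k * diagonal (RCLike.ofReal ∘ hA.eigenvalues) =
      diagonal (RCLike.ofReal ∘ (isHermitian_krausMap K hA).eigenvalues) * eigenKraus K hA k) :
    K k * A = krausMap K A * K k := by
  have hK := eq_mul_eigenKraus_mul K hA k
  have hB := (isHermitian_krausMap K hA).spectral_theorem
  have hA_eq := hA.spectral_theorem
  rw [Unitary.conjStarAlgAut_apply] at hA_eq hB
  set U := hA.eigenvectorUnitary
  set V := (isHermitian_krausMap K hA).eigenvectorUnitary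
  set l : Matrix n n 𝕜 := diagonal (RCLike.ofReal ∘ hA.eigenvalues)
  set m : Matrix n n 𝕜 := diagonal (RCLike.ofReal ∘ (isHermitian_krausMap K hA).eigenvalues)
  set W := eigenKraus K hA k
  have hU : star U.1 * U.1 = 1 := Unitary.coe_star_mul_self U
  have hV : star V.1 * V.1 = 1 := Unitary.coe_star_mul_self V
  calc K k * A = V.1 * W * (star U.1 * U.1) * l * star U.1 := by
        rw [hK, hA_eq]
        simp only [mul_assoc]
    _ = V.1 * m * (star V.1 * V.1) * W * star U.1 := by
        rw [hU, hV, mul_one, mul_one, mul_assoc V.1, h, ← mul_assoc]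
    _ = krausMap K A * K k := by
        rw [hK, hB]
        simp only [mul_assoc]

namespace IsUnitalKraus

variable {s : Set ℝ} {f : ℝ → ℝ}

lemma transitionMatrix_eigenKraus_mem (hK : IsUnitalKraus K) (hA : A.IsHermitian) :
    transitionMatrix (eigenKraus K hA) ∈ doublyStochastic ℝ n :=
  (hK.unitary_mul_mul _ _).transitionMatrix_mem_doublyStochastic

theorem re_trace_cfc_krausMap_le (hK : IsUnitalKraus K) (hA : A.IsHermitian)
    (hf : ConvexOn ℝ s f) (hs : spectrum ℝ A ⊆ s) :
    re (cfc f (krausMap K A)).trace ≤ re (cfc f A).trace := by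
  rw [re_trace_cfc (isHermitian_krausMap K hA), re_trace_cfc hA, eigenvalues_krausMap K hA]
  exact sum_map_mulVec_le_of_mem_doublyStochastic (hK.transitionMatrix_eigenKraus_mem hA) hf
    fun i => hs (hA.eigenvalues_mem_spectrum_real i)

theorem mul_eq_krausMap_mul_of_re_trace_cfc_eq (hK : IsUnitalKraus K) (hA : A.IsHermitian)
    (hf : StrictConvexOn ℝ s f) (hs : spectrum ℝ A ⊆ s)
    (heq : re (cfc f (krausMap K A)).trace = re (cfc f A).trace) (k : ι) :
    K k * A = krausMap K A * K k := by
  rw [re_trace_cfc (isHermitian_krausMap K hA), re_trace_cfc hA, eigenvalues_krausMap K hA] at heq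
  refine mul_eq_krausMap_mul_of_eigenKraus hA (mul_diagonal_eq_diagonal_mul (fun i j hij => ?_) k)
  rw [eigenvalues_krausMap K hA]
  exact eq_mulVec_of_sum_map_mulVec_eq (hK.transitionMatrix_eigenKraus_mem hA) hf
    (fun i => hs (hA.eigenvalues_mem_spectrum_real i)) heq hij

lemma krausMap_eq_self_of_commute (hK : IsUnitalKraus K) (h : ∀ k, Commute (K k) A) :
    krausMap K A = A := by
  simp only [krausMap_apply, (h _).eq, mul_assoc, ← Finset.mul_sum, hK.sum_mul_conjTranspose_self,
    mul_one]

theorem krausMap_eq_self_iff_commute (hK : IsUnitalKraus K) (hA : A.IsHermitian) :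
    krausMap K A = A ↔ ∀ k, Commute (K k) A := by
  refine ⟨fun h k => ?_, hK.krausMap_eq_self_of_commute⟩
  have hsq : StrictConvexOn ℝ Set.univ fun x : ℝ => x ^ 2 := even_two.strictConvexOn_pow two_ne_zero
  have hmul := hK.mul_eq_krausMap_mul_of_re_trace_cfc_eq hA hsq (Set.subset_univ _) (by rw [h]) k
  rwa [h] at hmul

theorem krausMap_cfc_eq_self (hK : IsUnitalKraus K) (hA : A.IsHermitian) (h : krausMap K A = A)
    (f : ℝ → ℝ) : krausMap K (cfc f A) = cfc f A :=
  hK.krausMap_eq_self_of_commute fun k =>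
    (((hK.krausMap_eq_self_iff_commute hA).1 h k).symm.cfc_real f).symm

lemma krausMap_eq_self_of_mul_eq (hK : IsUnitalKraus K) (hA : A.IsHermitian)
    (hidem : krausMap K (krausMap K A) = krausMap K A)
    (h : ∀ k, K k * A = krausMap K A * K k) : krausMap K A = A := by
  have hcomm := (hK.krausMap_eq_self_iff_commute (isHermitian_krausMap K hA)).1 hidem
  calc krausMap K A = ∑ k, (K k)ᴴ * K k * krausMap K A := by
        rw [← Finset.sum_mul, hK.sum_conjTranspose_mul_self, one_mul]
    _ = ∑ k, (K k)ᴴ * K k * A := by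
        refine Finset.sum_congr rfl fun k _ => ?_
        rw [mul_assoc, mul_assoc, h k, (hcomm k).eq]
    _ = A := by rw [← Finset.sum_mul, hK.sum_conjTranspose_mul_self, one_mul]

theorem re_trace_cfc_krausMap_eq_iff (hK : IsUnitalKraus K) (hA : A.IsHermitian)
    (hidem : krausMap K (krausMap K A) = krausMap K A) (hf : StrictConvexOn ℝ s f)
    (hs : spectrum ℝ A ⊆ s) :
    re (cfc f (krausMap K A)).trace = re (cfc f A).trace ↔ krausMap K A = A :=
  ⟨fun h => hK.krausMap_eq_self_of_mul_eq hA hidem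
    (hK.mul_eq_krausMap_mul_of_re_trace_cfc_eq hA hf hs h), fun h => by rw [h]⟩

theorem re_trace_cfc_le_re_trace_cfc_krausMap (hK : IsUnitalKraus K) (hA : A.IsHermitian)
    (hf : ConcaveOn ℝ s f) (hs : spectrum ℝ A ⊆ s) :
    re (cfc f A).trace ≤ re (cfc f (krausMap K A)).trace := by
  simpa only [re_trace_cfc_neg, neg_le_neg_iff] using hK.re_trace_cfc_krausMap_le hA hf.neg hs

theorem re_trace_cfc_krausMap_eq_iff_of_concave (hK : IsUnitalKraus K) (hA : A.IsHermitian)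
    (hidem : krausMap K (krausMap K A) = krausMap K A) (hf : StrictConcaveOn ℝ s f)
    (hs : spectrum ℝ A ⊆ s) :
    re (cfc f (krausMap K A)).trace = re (cfc f A).trace ↔ krausMap K A = A := by
  simpa only [re_trace_cfc_neg, neg_inj] using hK.re_trace_cfc_krausMap_eq_iff hA hidem hf.neg hs

end IsUnitalKraus

lemma spectrum_real_subset_Ici (hA : A.PosSemidef) : spectrum ℝ A ⊆ Set.Ici 0 := by
  rw [hA.1.spectrum_real_eq_range_eigenvalues]
  exact Set.range_subset_iff.2 hA.eigenvalues_nonneg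

lemma spectrum_cfc_rpow_subset_Ici (hA : A.PosSemidef) (t : ℝ) :
    spectrum ℝ (cfc (fun x : ℝ => x ^ t) A) ⊆ Set.Ici 0 := by
  have hmap := cfc_map_spectrum (p := IsSelfAdjoint) (fun x : ℝ => x ^ t) A
    (ha := hA.1) (hf := finite_real_spectrum.continuousOn _)
  refine hmap.subset.trans (Set.image_subset_iff.2 fun x hx => ?_)
  exact Real.rpow_nonneg (spectrum_real_subset_Ici hA hx) t

lemma cfc_rpow_one_div_cfc_rpow (hA : A.PosSemidef) {t : ℝ} (ht : t ≠ 0) :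
    cfc (fun x : ℝ => x ^ (1 / t)) (cfc (fun x : ℝ => x ^ t) A) = A := by
  have hcomp := cfc_comp' (p := IsSelfAdjoint) (fun x : ℝ => x ^ (1 / t)) (fun x : ℝ => x ^ t) A
    ((finite_real_spectrum.image _).continuousOn _) (finite_real_spectrum.continuousOn _) hA.1
  refine hcomp.symm.trans ((cfc_congr fun x hx => ?_).trans (cfc_id' ℝ A hA.1))
  rw [← Real.rpow_mul (spectrum_real_subset_Ici hA hx), mul_one_div_cancel ht, Real.rpow_one]

theorem stmt_17_general (hK : IsUnitalKraus K)
    (hidem : ∀ X, krausMap K (krausMap K X) = krausMap K X) {a : ℝ} (ha0 : 0 < a) (ha1 : a ≠ 1)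
    {ρ : Matrix n n 𝕜} (hρ : ρ.PosSemidef) :
    0 ≤ (re (cfc (fun x : ℝ => x ^ (1 / a)) (krausMap K (cfc (fun x : ℝ => x ^ a) ρ))).trace -
      re ρ.trace) / (a - 1) ∧
    ((re (cfc (fun x : ℝ => x ^ (1 / a)) (krausMap K (cfc (fun x : ℝ => x ^ a) ρ))).trace -
      re ρ.trace) / (a - 1) = 0 ↔ krausMap K ρ = ρ) := by
  set B := cfc (fun x : ℝ => x ^ a) ρ
  have hB : B.IsHermitian := cfc_predicate _ ρ
  have hspec : spectrum ℝ B ⊆ Set.Ici 0 := spectrum_cfc_rpow_subset_Ici hρ a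
  have hBρ : cfc (fun x : ℝ => x ^ (1 / a)) B = ρ := cfc_rpow_one_div_cfc_rpow hρ ha0.ne'
  have hfix : krausMap K ρ = ρ ↔ krausMap K B = B :=
    ⟨fun h => hK.krausMap_cfc_eq_self hρ.1 h _, fun h => hBρ ▸ hK.krausMap_cfc_eq_self hB h _⟩
  have htr : re ρ.trace = re (cfc (fun x : ℝ => x ^ (1 / a)) B).trace := by rw [hBρ]
  rw [div_eq_zero_iff, or_iff_left (sub_ne_zero.2 ha1), sub_eq_zero, hfix, htr]
  rcases lt_or_gt_of_ne ha1 with ha | ha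
  · have hconv := strictConvexOn_rpow (one_lt_one_div ha0 ha)
    have hle := hK.re_trace_cfc_krausMap_le hB hconv.convexOn hspec
    exact ⟨div_nonneg_of_nonpos (sub_nonpos.2 hle) (sub_nonpos.2 ha.le),
      hK.re_trace_cfc_krausMap_eq_iff hB (hidem B) hconv hspec⟩
  · have hconc := Real.strictConcaveOn_rpow (one_div_pos.2 ha0) ((div_lt_one ha0).2 ha)
    have hle := hK.re_trace_cfc_le_re_trace_cfc_krausMap hB hconc.concaveOn hspec
    exact ⟨div_nonneg (sub_nonneg.2 hle) (sub_nonneg.2 ha.le),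
      hK.re_trace_cfc_krausMap_eq_iff_of_concave hB (hidem B) hconc hspec⟩

/-- For a unital idempotent CPTP map `E`, `a ∈ (0,1) ∪ (1,2]` and a positive definite
density matrix `ρ`, the closed-form resource measure `(Tr((E(ρ^a))^(1/a)) - 1)/(a - 1)`
is nonnegative, and it vanishes if and only if `ρ` is a fixed point of `E`. -/
theorem stmt_17 {d : ℕ}
    (E : Matrix (Fin d) (Fin d) ℂ →ₗ[ℂ] Matrix (Fin d) (Fin d) ℂ)
    (hKraus : ∃ (n : ℕ) (K : Fin n → Matrix (Fin d) (Fin d) ℂ),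
      (∀ X, E X = ∑ i, K i * X * (K i)ᴴ) ∧ ∑ i, (K i)ᴴ * K i = 1)
    (hUnital : E 1 = 1)
    (hIdem : ∀ X, E (E X) = E X)
    (a : ℝ) (ha : a ∈ Set.Ioo (0 : ℝ) 1 ∪ Set.Ioc (1 : ℝ) 2)
    (ρ : Matrix (Fin d) (Fin d) ℂ) (hρ : ρ.PosDef) (hρtr : ρ.trace = 1) :
    0 ≤ (((mpow (E (mpow ρ a)) (1 / a)).trace).re - 1) / (a - 1) ∧
    ((((mpow (E (mpow ρ a)) (1 / a)).trace).re - 1) / (a - 1) = 0 ↔ E ρ = ρ) := by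
  obtain ⟨r, K, hE, hTP⟩ := hKraus
  obtain rfl : E = krausMap K := LinearMap.ext hE
  have ha' : 0 < a ∧ a ≠ 1 :=
    ha.elim (fun h => ⟨h.1, h.2.ne⟩) fun h => ⟨zero_lt_one.trans h.1, h.1.ne'⟩
  have hK : IsUnitalKraus K := ⟨hTP, (krausMap_one_eq_sum K).symm.trans hUnital⟩
  simpa [mpow, hρtr] using stmt_17_general hK hIdem ha'.1 ha'.2 hρ.posSemidef
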